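/- Let T be a nonnegative tensor of order m ≥ 2 and dimension n ≥ 2. If the majorization matrix M(T) is a primitive matrix, then T is a primitive tensor. -/

import Mathlib

open Finset

/-- `(T x^{m-1})_i` for an order-`(k+1)` tensor encoded by its first index
and the `k` trailing indices (so for an order-`m` tensor, `k = m - 1`). -/
def tapp {ι : Type*} [Fintype ι] {k : ℕ} (T : ι → (Fin k → ι) → ℝ) (x : ι → ℝ) (i : ι) : ℝ :=
  ∑ β : Fin k → ι, T i β * ∏ l, x (β l)

/-- All entries of the tensor are nonnegative. -/
def TNonneg {ι : Type*} {k : ℕ} (T : ι → (Fin k → ι) → ℝ) : Prop :=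
  ∀ i β, 0 ≤ T i β

/-- `T` is strictly nonnegative: nonnegative, and `T x^{m-1} > 0` whenever `x > 0`. -/
def TStrictlyNonneg {ι : Type*} [Fintype ι] {k : ℕ} (T : ι → (Fin k → ι) → ℝ) : Prop :=
  TNonneg T ∧ ∀ x : ι → ℝ, (∀ i, 0 < x i) → ∀ i, 0 < tapp T x i

/-- Representation matrix `G(T)`: `G(T)_{ij}` is the sum of all `T_{i i₂…i_m}` with
`j ∈ {i₂,…,i_m}`. -/
def repMat {ι : Type*} [Fintype ι] [DecidableEq ι] {k : ℕ}
    (T : ι → (Fin k → ι) → ℝ) : Matrix ι ι ℝ :=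
  fun i j => ∑ β : Fin k → ι, if ∃ l, β l = j then T i β else 0

/-- Majorization matrix `M(T)`: `M(T)_{ij} = T_{i j j … j}`. -/
def majMat {ι : Type*} {k : ℕ} (T : ι → (Fin k → ι) → ℝ) : Matrix ι ι ℝ :=
  fun i j => T i (fun _ => j)

/-- A square matrix is reducible if some nonempty proper index subset `I` satisfies
`A i j = 0` for all `i ∈ I`, `j ∉ I`. -/
def MatReducible {ι : Type*} [Fintype ι] (A : Matrix ι ι ℝ) : Prop :=
  ∃ I : Finset ι, I.Nonempty ∧ I ≠ Finset.univ ∧ ∀ i ∈ I, ∀ j ∉ I, A i j = 0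

def MatIrreducible {ι : Type*} [Fintype ι] (A : Matrix ι ι ℝ) : Prop :=
  ¬ MatReducible A

/-- A square nonnegative matrix is primitive if some positive power is entrywise positive. -/
def MatPrimitive {ι : Type*} [Fintype ι] [DecidableEq ι] (A : Matrix ι ι ℝ) : Prop :=
  ∃ p : ℕ, 0 < p ∧ ∀ i j, 0 < (A ^ p) i j

/-- `lam ∈ ℂ` is an eigenvalue of `T`:
`(T x^{m-1})_i = lam * x_i^{m-1}` for some nonzero `x ∈ ℂⁿ`. -/
def TIsEig {ι : Type*} [Fintype ι] {k : ℕ} (T : ι → (Fin k → ι) → ℝ) (lam : ℂ) : Prop :=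
  ∃ x : ι → ℂ, x ≠ 0 ∧
    ∀ i, (∑ β : Fin k → ι, (T i β : ℂ) * ∏ l, x (β l)) = lam * x i ^ k

/-- Spectral radius: the supremum of moduli of eigenvalues. -/
noncomputable def specRad {ι : Type*} [Fintype ι] {k : ℕ}
    (T : ι → (Fin k → ι) → ℝ) : ℝ :=
  sSup {r : ℝ | ∃ lam : ℂ, TIsEig T lam ∧ r = ‖lam‖}

/-- Induced tensor `T_I` on a subset `I` of the index set. -/
def inducedT {ι : Type*} {k : ℕ} (T : ι → (Fin k → ι) → ℝ) (I : Finset ι) :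
    {i // i ∈ I} → (Fin k → {i // i ∈ I}) → ℝ :=
  fun i β => T i.val (fun l => (β l).val)

/-- The identity tensor: `E_{i₁…i_m} = 1` if all indices coincide, `0` otherwise. -/
def idT (ι : Type*) [DecidableEq ι] (k : ℕ) : ι → (Fin k → ι) → ℝ :=
  fun i β => if ∀ l, β l = i then 1 else 0

/-- A tensor is reducible if some nonempty proper index subset `I` satisfies
`T_{i₁ i₂ … i_m} = 0` for all `i₁ ∈ I` and `i₂, …, i_m ∉ I`. -/
def TReducible {ι : Type*} [Fintype ι] {k : ℕ} (T : ι → (Fin k → ι) → ℝ) : Prop :=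
  ∃ I : Finset ι, I.Nonempty ∧ I ≠ Finset.univ ∧
    ∀ i ∈ I, ∀ β : Fin k → ι, (∀ l, β l ∉ I) → T i β = 0

/-- The map `F_T(x)_i = ((T x^{m-1})_i)^{1/(m-1)}` (here `k = m - 1`). -/
noncomputable def FT {ι : Type*} [Fintype ι] {k : ℕ}
    (T : ι → (Fin k → ι) → ℝ) (x : ι → ℝ) : ι → ℝ :=
  fun i => (tapp T x i) ^ ((k : ℝ)⁻¹)

/-- A tensor is primitive if some iterate of `F_T` is entrywise positive on every
nonzero nonnegative vector. -/
def TPrimitive {ι : Type*} [Fintype ι] {k : ℕ} (T : ι → (Fin k → ι) → ℝ) : Prop :=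
  ∃ p : ℕ, 0 < p ∧ ∀ x : ι → ℝ, (∀ i, 0 ≤ x i) → x ≠ 0 → ∀ i, 0 < (FT T)^[p] x i

/-- `T` is weakly positive: all off-diagonal entries of `M(T)` are positive. -/
def TWeaklyPositive {ι : Type*} {k : ℕ} (T : ι → (Fin k → ι) → ℝ) : Prop :=
  ∀ i j, i ≠ j → 0 < T i (fun _ => j)

/-- `T` is essentially positive: `T x^{m-1} > 0` for every nonzero `x ≥ 0`. -/
def TEssentiallyPositive {ι : Type*} [Fintype ι] {k : ℕ} (T : ι → (Fin k → ι) → ℝ) : Prop :=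
  ∀ x : ι → ℝ, (∀ i, 0 ≤ x i) → x ≠ 0 → ∀ i, 0 < tapp T x i

/-- Hilbert's projective metric between two positive vectors:
`d(u,v) = log (max_i v_i/u_i) - log (min_i v_i/u_i)`. -/
noncomputable def hilbertD {n : ℕ} (hn : 0 < n) (u v : Fin n → ℝ) : ℝ :=
  Real.log ((Finset.univ : Finset (Fin n)).sup' ⟨⟨0, hn⟩, Finset.mem_univ _⟩
      (fun i => v i / u i)) -
  Real.log ((Finset.univ : Finset (Fin n)).inf' ⟨⟨0, hn⟩, Finset.mem_univ _⟩
      (fun i => v i / u i))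

/-! If `M(T)_{ij} > 0` and `x_j > 0`, then the diagonal term `T_{i j … j} x_j^{m-1}` alone makes
`F_T(x)_i` positive. So one application of `F_T` creates positive entries at least wherever
multiplication by `M(T)` does, and by induction the support of `F_T^q(x)` contains that of
`M(T)^q x`. A primitive `M(T)` has a power sending every nonzero `x ≥ 0` to a positive vector. -/

open scoped Matrix

section DotProduct

variable {ι R : Type*} [Fintype ι] [Semiring R]

theorem exists_pos_and_pos_of_dotProduct_pos [LinearOrder R] [IsOrderedRing R] {u v : ι → R}
    (hu : 0 ≤ u) (huv : 0 < u ⬝ᵥ v) : ∃ j, 0 < u j ∧ 0 < v j := by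
  have h_sum : ∑ _j : ι, (0 : R) < ∑ j, u j * v j := by
    rwa [Finset.sum_const_zero]
  obtain ⟨j, -, huvj⟩ := Finset.exists_lt_of_sum_lt h_sum
  have hu_ne : u j ≠ 0 := left_ne_zero_of_mul huvj.ne'
  have hv_pos : 0 < v j := not_le.mp fun hv ↦
    huvj.not_ge (mul_nonpos_of_nonneg_of_nonpos (hu j) hv)
  exact ⟨j, (hu j).lt_of_ne' hu_ne, hv_pos⟩

theorem dotProduct_pos_of_forall_pos [PartialOrder R] [IsStrictOrderedRing R] {u v : ι → R}
    (hu : ∀ j, 0 < u j) (hv : 0 < v) : 0 < u ⬝ᵥ v := by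
  obtain ⟨hv_nonneg, j, hvj⟩ := Pi.lt_def.mp hv
  exact Finset.sum_pos' (fun l _ ↦ mul_nonneg (hu l).le (hv_nonneg l))
    ⟨j, Finset.mem_univ j, mul_pos (hu j) hvj⟩

end DotProduct

section NonnegTensor

variable {ι : Type*} [Fintype ι] {k : ℕ} {T : ι → (Fin k → ι) → ℝ} {x : ι → ℝ}

theorem tapp_nonneg (hT : TNonneg T) (hx : 0 ≤ x) : 0 ≤ tapp T x :=
  fun i ↦ Finset.sum_nonneg fun β _ ↦
    mul_nonneg (hT i β) (Finset.prod_nonneg fun l _ ↦ hx (β l))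

theorem tapp_pos_of_majMat_pos (hT : TNonneg T) (hx : 0 ≤ x) {i j : ι}
    (hij : 0 < majMat T i j) (hj : 0 < x j) : 0 < tapp T x i :=
  Finset.sum_pos' (fun β _ ↦ mul_nonneg (hT i β) (Finset.prod_nonneg fun l _ ↦ hx (β l)))
    ⟨fun _ ↦ j, Finset.mem_univ _, mul_pos hij (Finset.prod_pos fun _ _ ↦ hj)⟩

theorem FT_nonneg (hT : TNonneg T) (hx : 0 ≤ x) : 0 ≤ FT T x :=
  fun i ↦ Real.rpow_nonneg (tapp_nonneg hT hx i) _

theorem FT_pos_of_majMat_pos (hT : TNonneg T) (hx : 0 ≤ x) {i j : ι}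
    (hij : 0 < majMat T i j) (hj : 0 < x j) : 0 < FT T x i :=
  Real.rpow_pos_of_pos (tapp_pos_of_majMat_pos hT hx hij hj) _

theorem FT_iterate_nonneg (hT : TNonneg T) (hx : 0 ≤ x) (q : ℕ) : 0 ≤ (FT T)^[q] x :=
  Function.Iterate.rec (0 ≤ ·) hx (fun _ ↦ FT_nonneg hT) q

theorem FT_iterate_pos_of_majMat_pow_mulVec_pos [DecidableEq ι] (hT : TNonneg T) (hx : 0 ≤ x)
    (q : ℕ) {i : ι} (hi : 0 < (majMat T ^ q *ᵥ x) i) : 0 < (FT T)^[q] x i := by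
  induction q generalizing i with
  | zero => simpa only [pow_zero, Matrix.one_mulVec, Function.iterate_zero_apply] using hi
  | succ q ih =>
    rw [pow_succ', ← Matrix.mulVec_mulVec] at hi
    obtain ⟨j, hij, hj⟩ := exists_pos_and_pos_of_dotProduct_pos (fun j ↦ hT i fun _ ↦ j) hi
    rw [Function.iterate_succ_apply']
    exact FT_pos_of_majMat_pos hT (FT_iterate_nonneg hT hx q) hij (ih hj)

theorem majorization_primitive_imp_tensor_primitive_general [DecidableEq ι] (hT : TNonneg T)
    (hM : MatPrimitive (majMat T)) : TPrimitive T := by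
  obtain ⟨p, hp, hMp⟩ := hM
  refine ⟨p, hp, fun x hx hx_ne i ↦ ?_⟩
  have hx_pos : 0 < x := lt_of_le_of_ne hx hx_ne.symm
  exact FT_iterate_pos_of_majMat_pow_mulVec_pos hT hx p
    (dotProduct_pos_of_forall_pos (hMp i) hx_pos)

end NonnegTensor

theorem majorization_primitive_imp_tensor_primitive
    (m n : ℕ) (hm : 2 ≤ m) (hn : 2 ≤ n)
    (T : Fin n → (Fin (m - 1) → Fin n) → ℝ) (hT : TNonneg T)
    (hM : MatPrimitive (majMat T)) :
    TPrimitive T :=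
  majorization_primitive_imp_tensor_primitive_general hT hM
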